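/- For every ε > 0 there exists a constant C = C(ε) such that for all real H ≥ 2 and all δ ∈ ℚ, the number of 2×2 matrices with all entries in F(H) and with determinant equal to δ is at most C·H^{4+ε}. -/

import Mathlib

/-- The set of rationals `a/b` in lowest terms with `|a| ≤ H` and `1 ≤ b ≤ H`. -/
def Farey (H : ℝ) : Set ℚ := {x : ℚ | |(x.num : ℝ)| ≤ H ∧ (x.den : ℝ) ≤ H}

/-!
By Cauchy–Schwarz, the number of solutions of `a * d - b * c = δ` with `a, b, c, d` in a finite set
is largest for `δ = 0`, where it is the multiplicative energy of that set. For nonzero rationals,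
clearing denominators in `a * d = b * c` gives
`num a * num d * den b * den c = num b * num c * den a * den d`.
The four factors on the left can be chosen in `O(H ^ 4)` ways, and then the four on the right divide
a fixed nonzero integer of size at most `H ^ 4`, which leaves `O(H ^ ε)` choices by the divisor
bound. The solutions with `a * d = b * c = 0` are `O(H ^ 4)` in number.
-/

open Finset
open scoped Combinatorics.Additive

section DivisorBound

lemma add_one_le_mul_pow {c y : ℝ} (hc : 1 ≤ c) (hy : 1 ≤ c * (y - 1)) (k : ℕ) :
    (k + 1 : ℝ) ≤ c * y ^ k := by
  have hy1 : 0 < y - 1 := pos_of_mul_pos_right (zero_lt_one.trans_le hy) (zero_le_one.trans hc)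
  have bernoulli : 1 + k * (y - 1) ≤ y ^ k := one_add_mul_sub_le_pow (by linarith) k
  calc (k + 1 : ℝ) ≤ k * (c * (y - 1)) + c := by
        gcongr
        exact le_mul_of_one_le_right k.cast_nonneg hy
    _ = c * (1 + k * (y - 1)) := by ring
    _ ≤ c * y ^ k := by gcongr

lemma natCast_rpow_eq_prod_primeFactors {n : ℕ} (hn : n ≠ 0) (ε : ℝ) :
    (n : ℝ) ^ ε = ∏ p ∈ n.primeFactors, ((p : ℝ) ^ ε) ^ n.factorization p := by
  have factored : (n : ℝ) = ∏ p ∈ n.primeFactors, (p : ℝ) ^ n.factorization p := by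
    exact_mod_cast (Nat.prod_factorization_pow_eq_self hn).symm
  rw [factored, ← Real.finsetProd_rpow _ _ fun p _ ↦ by positivity]
  exact prod_congr rfl fun p _ ↦ (Real.rpow_pow_comm p.cast_nonneg ε _).symm

lemma exists_add_one_le_ite_mul_rpow_pow {ε : ℝ} (hε : 0 < ε) :
    ∃ c : ℝ, 1 ≤ c ∧ ∃ P : ℕ, ∀ p : ℕ, 2 ≤ p → ∀ k : ℕ,
      (k + 1 : ℝ) ≤ (if p < P then c else 1) * ((p : ℝ) ^ ε) ^ k := by
  have two_rpow : 0 < (2 : ℝ) ^ ε - 1 := sub_pos.mpr (Real.one_lt_rpow one_lt_two hε)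
  set c : ℝ := 1 + 1 / ((2 : ℝ) ^ ε - 1) with hc
  have one_le_c : 1 ≤ c := le_add_of_nonneg_right (by positivity)
  refine ⟨c, one_le_c, ⌈(2 : ℝ) ^ (1 / ε)⌉₊, fun p hp k ↦ ?_⟩
  split_ifs with hpP
  · have two_rpow_le : (2 : ℝ) ^ ε ≤ (p : ℝ) ^ ε := by gcongr; exact_mod_cast hp
    refine add_one_le_mul_pow one_le_c ?_ k
    calc (1 : ℝ) ≤ c * ((2 : ℝ) ^ ε - 1) := by
          rw [hc, add_mul, one_div_mul_cancel two_rpow.ne']; linarith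
      _ ≤ c * ((p : ℝ) ^ ε - 1) := by gcongr
  · have rpow_le : (2 : ℝ) ^ (1 / ε) ≤ p := Nat.ceil_le.mp (not_lt.mp hpP)
    have two_le : (2 : ℝ) ≤ (p : ℝ) ^ ε := by
      rwa [← Real.rpow_inv_le_iff_of_pos two_pos.le p.cast_nonneg hε, ← one_div]
    exact add_one_le_mul_pow le_rfl (by linarith) k

theorem exists_card_natDivisors_le_mul_rpow {ε : ℝ} (hε : 0 < ε) :
    ∃ C : ℝ, ∀ n : ℕ, (#n.divisors : ℝ) ≤ C * (n : ℝ) ^ ε := by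
  obtain ⟨c, one_le_c, P, factor_le⟩ := exists_add_one_le_ite_mul_rpow_pow hε
  refine ⟨c ^ P, fun n ↦ ?_⟩
  rcases eq_or_ne n 0 with rfl | hn
  · simp [Real.zero_rpow hε.ne']
  have few_small : #{p ∈ n.primeFactors | p < P} ≤ P := by
    simpa using card_le_card (show {p ∈ n.primeFactors | p < P} ⊆ range P by grind)
  calc (#n.divisors : ℝ) = ∏ p ∈ n.primeFactors, (n.factorization p + 1 : ℝ) := by
        rw [Nat.card_divisors hn]; push_cast; rfl
    _ ≤ ∏ p ∈ n.primeFactors, (if p < P then c else 1) * ((p : ℝ) ^ ε) ^ n.factorization p :=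
        prod_le_prod (fun p _ ↦ by positivity) fun p hp ↦
          factor_le p (Nat.prime_of_mem_primeFactors hp).two_le _
    _ = c ^ #{p ∈ n.primeFactors | p < P} * (n : ℝ) ^ ε := by
        rw [prod_mul_distrib, ← prod_filter, prod_const, natCast_rpow_eq_prod_primeFactors hn]
    _ ≤ c ^ P * (n : ℝ) ^ ε := by gcongr

lemma card_intDivisors (z : ℤ) : #z.divisors = 2 * #z.natAbs.divisors := by
  rw [Int.divisors, card_disjUnion, card_map, card_map, two_mul]

theorem exists_card_intDivisors_le_mul_rpow {ε : ℝ} (hε : 0 < ε) :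
    ∃ C : ℝ, ∀ z : ℤ, (#z.divisors : ℝ) ≤ C * |(z : ℝ)| ^ ε := by
  obtain ⟨C, hC⟩ := exists_card_natDivisors_le_mul_rpow hε
  refine ⟨2 * C, fun z ↦ ?_⟩
  have := hC z.natAbs
  rw [Nat.cast_natAbs, Int.cast_abs] at this
  rw [card_intDivisors]
  push_cast
  linarith

end DivisorBound

section CauchySchwarz

variable {α β γ : Type*} [DecidableEq γ]

lemma card_filter_eq_eq_sum (s : Finset α) (t : Finset β) {f : α → γ} {g : β → γ} {u : Finset γ}
    (hf : Set.MapsTo f s u) :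
    #{x ∈ s ×ˢ t | f x.1 = g x.2} = ∑ y ∈ u, #{a ∈ s | f a = y} * #{b ∈ t | g b = y} := by
  rw [card_eq_sum_card_fiberwise (f := fun x ↦ f x.1) (t := u)
    fun x hx ↦ hf (mem_product.mp (mem_filter.mp hx).1).1]
  refine sum_congr rfl fun y _ ↦ ?_
  rw [← card_product, ← filter_product, filter_filter]
  congr 1
  grind

lemma card_filter_eq_sq_le (s : Finset α) (t : Finset β) (f : α → γ) (g : β → γ) :
    #{x ∈ s ×ˢ t | f x.1 = g x.2} ^ 2 ≤
      #{x ∈ s ×ˢ s | f x.1 = f x.2} * #{x ∈ t ×ˢ t | g x.1 = g x.2} := by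
  set u := s.image f ∪ t.image g
  have hf : Set.MapsTo f s u := fun a ha ↦ mem_union_left _ (mem_image_of_mem f ha)
  have hg : Set.MapsTo g t u := fun b hb ↦ mem_union_right _ (mem_image_of_mem g hb)
  rw [card_filter_eq_eq_sum s t hf, card_filter_eq_eq_sum s s hf, card_filter_eq_eq_sum t t hg]
  simp only [← sq]
  exact sum_mul_sq_le_sq_mul_sq u _ _

end CauchySchwarz

section MulEnergy

lemma card_mul_sub_mul_eq_le_mulEnergy {R : Type*} [NonUnitalNonAssocRing R] [DecidableEq R]
    (s t : Finset R) (δ : R) :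
    #{x ∈ (s ×ˢ t) ×ˢ s ×ˢ t | x.1.1 * x.1.2 - x.2.1 * x.2.2 = δ} ≤ Eₘ[s, t] := by
  have cauchy_schwarz := card_filter_eq_sq_le (s ×ˢ t) (s ×ˢ t)
    (fun p ↦ p.1 * p.2) (fun p ↦ δ + p.1 * p.2)
  simp only [add_right_inj, ← mulEnergy_eq_card_filter, ← sq] at cauchy_schwarz
  simpa only [sub_eq_iff_eq_add] using (Nat.pow_le_pow_iff_left two_ne_zero).mp cauchy_schwarz

theorem ncard_det_eq_le_mulEnergy {R : Type*} [CommRing R] [DecidableEq R] (s : Finset R) (δ : R) :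
    {A : Matrix (Fin 2) (Fin 2) R | (∀ i j, A i j ∈ s) ∧ A.det = δ}.ncard ≤ Eₘ[s] := by
  refine le_trans ?_ (card_mul_sub_mul_eq_le_mulEnergy s s δ)
  rw [← Set.ncard_coe_finset]
  refine Set.ncard_le_ncard_of_injOn (fun A ↦ ((A 0 0, A 1 1), (A 0 1, A 1 0))) ?_ ?_
  · rintro A ⟨hA, hdet⟩
    rw [Matrix.det_fin_two] at hdet
    simp [hA, hdet]
  · intro A _ B _ hAB
    simp only [Prod.mk.injEq] at hAB
    ext i j
    fin_cases i <;> fin_cases j <;> simp [hAB]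

variable {M : Type*} [MulZeroClass M] [NoZeroDivisors M] [DecidableEq M]

lemma card_filter_mul_eq_zero_le (s t : Finset M) :
    #{p ∈ s ×ˢ t | p.1 * p.2 = 0} ≤ #s + #t := by
  have covered : {p ∈ s ×ˢ t | p.1 * p.2 = 0} ⊆ s ×ˢ {0} ∪ {0} ×ˢ t := by
    intro p hp
    simp only [mem_filter, mem_product, mul_eq_zero] at hp
    simp only [mem_union, mem_product, mem_singleton]
    tauto
  simpa using (card_le_card covered).trans (card_union_le _ _)

lemma mulEnergy_le_mulEnergy_erase_zero_add (s t : Finset M) :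
    Eₘ[s, t] ≤ Eₘ[s.erase 0, t.erase 0] + (#s + #t) ^ 2 := by
  set Z := {p ∈ s ×ˢ t | p.1 * p.2 = 0}
  have covered : {x ∈ (s ×ˢ t) ×ˢ s ×ˢ t | x.1.1 * x.1.2 = x.2.1 * x.2.2} ⊆
      {x ∈ (s.erase 0 ×ˢ t.erase 0) ×ˢ s.erase 0 ×ˢ t.erase 0 |
        x.1.1 * x.1.2 = x.2.1 * x.2.2} ∪ Z ×ˢ Z := by
    rintro ⟨⟨a, d⟩, b, c⟩ hx
    by_cases h0 : a * d = 0
    · grind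
    · have := left_ne_zero_of_mul h0
      have := right_ne_zero_of_mul h0
      grind [left_ne_zero_of_mul, right_ne_zero_of_mul]
  rw [mulEnergy_eq_card_filter, mulEnergy_eq_card_filter, sq]
  refine (card_le_card covered).trans ((card_union_le _ _).trans ?_)
  rw [card_product]
  gcongr <;> exact card_filter_mul_eq_zero_le s t

end MulEnergy

section RationalEnergy

lemma card_filter_prod_eq_prod_le {ι : Type*} [Fintype ι] (S T : Finset (ι → ℤ)) {D : ℕ}
    (hD : ∀ u ∈ S, #(∏ i, u i).divisors ≤ D) :
    #{x ∈ S ×ˢ T | ∏ i, x.1 i = ∏ i, x.2 i ∧ ∏ i, x.1 i ≠ 0} ≤ #S * D ^ Fintype.card ι := by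
  classical
  refine (card_le_mul_card_image_of_maps_to (f := Prod.fst) (t := S) (by grind)
    (D ^ Fintype.card ι) fun u hu ↦ ?_).trans_eq (mul_comm _ _)
  calc _ ≤ #(Fintype.piFinset fun _ : ι ↦ (∏ i, u i).divisors) := by
        refine card_le_card_of_injOn Prod.snd ?_ ?_
        · rintro ⟨u', v⟩ hx
          simp only [coe_filter, mem_filter, Set.mem_ofPred_eq] at hx
          obtain ⟨⟨-, hprod, hne⟩, rfl⟩ := hx
          simp only [Fintype.coe_piFinset, Set.mem_univ_pi, mem_coe, Int.mem_divisors]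
          exact fun i ↦ ⟨hprod ▸ dvd_prod_of_mem v (mem_univ i), hne⟩
        · grind [Set.InjOn]
    _ ≤ D ^ Fintype.card ι := by
        rw [Fintype.card_piFinset, prod_const, card_univ]
        exact Nat.pow_le_pow_left (hD u hu) _

variable {s : Finset ℚ} {T : Finset ℤ} {D : ℕ}

lemma injective_num_den : Function.Injective fun x : ℚ ↦ (x.num, (x.den : ℤ)) := by
  intro x y hxy
  simp only [Prod.mk.injEq, Nat.cast_inj] at hxy
  exact Rat.ext hxy.1 hxy.2

lemma card_le_card_sq_of_num_den_mem (hs : ∀ x ∈ s, x.num ∈ T ∧ (x.den : ℤ) ∈ T) :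
    #s ≤ #T ^ 2 := by
  rw [sq, ← card_product]
  exact card_le_card_of_injOn _ (by simpa [Set.MapsTo] using hs) injective_num_den.injOn

lemma num_mul_num_mul_den_mul_den_eq {a b c d : ℚ} (h : a * d = b * c) :
    a.num * d.num * b.den * c.den = b.num * c.num * a.den * d.den := by
  have cleared : (a.num * d.num * b.den * c.den : ℚ) = b.num * c.num * a.den * d.den := by
    simp only [← Rat.mul_den_eq_num]
    linear_combination a.den * b.den * c.den * d.den * h
  exact_mod_cast cleared

lemma mulEnergy_erase_zero_le (hs : ∀ x ∈ s, x.num ∈ T ∧ (x.den : ℤ) ∈ T)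
    (hD : ∀ u : Fin 4 → ℤ, (∀ i, u i ∈ T) → #(∏ i, u i).divisors ≤ D) :
    Eₘ[s.erase 0] ≤ #T ^ 4 * D ^ 4 := by
  set S : Finset (Fin 4 → ℤ) := Fintype.piFinset fun _ ↦ T
  have integral_count := card_filter_prod_eq_prod_le S S fun u hu ↦
    hD u (Fintype.mem_piFinset.mp hu)
  rw [Fintype.card_piFinset_const, Fintype.card_fin] at integral_count
  refine le_trans ?_ integral_count
  rw [mulEnergy_eq_card_filter]
  refine card_le_card_of_injOn (fun x ↦
    (![x.1.1.num, x.1.2.num, x.2.1.den, x.2.2.den],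
      ![x.2.1.num, x.2.2.num, x.1.1.den, x.1.2.den])) ?_ ?_
  · rintro ⟨⟨a, d⟩, b, c⟩ hx
    simp only [coe_filter, mem_product, mem_erase, Set.mem_ofPred_eq] at hx
    obtain ⟨⟨⟨⟨-, has⟩, -, hds⟩, ⟨hb, hbs⟩, hc, hcs⟩, h⟩ := hx
    simp only [S, coe_filter, mem_product, Fintype.mem_piFinset, Fin.forall_fin_succ,
      Fin.prod_univ_four, Set.mem_ofPred_eq]
    simp [hs, hb, hc, has, hbs, hcs, hds, num_mul_num_mul_den_mul_den_eq h]
  · rintro ⟨⟨a, d⟩, b, c⟩ - ⟨⟨a', d'⟩, b', c'⟩ - hx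
    simp only [Prod.mk.injEq, Matrix.vecCons_inj, Nat.cast_inj] at hx
    obtain ⟨⟨ha, hd, hb', hc', -⟩, hb, hc, ha', hd', -⟩ := hx
    rw [Rat.ext ha ha', Rat.ext hb hb', Rat.ext hc hc', Rat.ext hd hd']

theorem mulEnergy_le_of_num_den_mem (hs : ∀ x ∈ s, x.num ∈ T ∧ (x.den : ℤ) ∈ T)
    (hD : ∀ u : Fin 4 → ℤ, (∀ i, u i ∈ T) → #(∏ i, u i).divisors ≤ D) :
    Eₘ[s] ≤ #T ^ 4 * (D ^ 4 + 4) :=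
  calc Eₘ[s] ≤ Eₘ[s.erase 0] + (#s + #s) ^ 2 := mulEnergy_le_mulEnergy_erase_zero_add s s
    _ ≤ #T ^ 4 * D ^ 4 + (#T ^ 2 + #T ^ 2) ^ 2 := by
        gcongr
        · exact mulEnergy_erase_zero_le hs hD
        all_goals exact card_le_card_sq_of_num_den_mem hs
    _ = #T ^ 4 * (D ^ 4 + 4) := by ring

end RationalEnergy

section Farey

/-- The integers of absolute value at most `H`, among which the numerators and denominators of the
elements of `Farey H` lie. -/
noncomputable def intsLE (H : ℝ) : Finset ℤ := Icc ⌈-H⌉ ⌊H⌋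

lemma mem_intsLE {H : ℝ} {z : ℤ} : z ∈ intsLE H ↔ |(z : ℝ)| ≤ H := by
  rw [intsLE, mem_Icc, Int.ceil_le, Int.le_floor, abs_le]

lemma card_intsLE_le {H : ℝ} (hH : 0 ≤ H) : (#(intsLE H) : ℝ) ≤ 2 * H + 1 := by
  have floor_nonneg : 0 ≤ ⌊H⌋ := Int.floor_nonneg.mpr hH
  have card_eq : (#(intsLE H) : ℤ) = 2 * ⌊H⌋ + 1 := by
    rw [intsLE, Int.card_Icc, Int.ceil_neg]; omega
  have : (#(intsLE H) : ℝ) = 2 * ⌊H⌋ + 1 := by exact_mod_cast card_eq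
  linarith [Int.floor_le H]

lemma num_mem_intsLE_and_den_mem_intsLE {H : ℝ} {x : ℚ} (hx : x ∈ Farey H) :
    x.num ∈ intsLE H ∧ (x.den : ℤ) ∈ intsLE H := by
  simpa [mem_intsLE, Farey] using hx

lemma finite_farey (H : ℝ) : (Farey H).Finite :=
  ((intsLE H ×ˢ intsLE H).finite_toSet.preimage injective_num_den.injOn).subset fun x hx ↦ by
    simpa using num_mem_intsLE_and_den_mem_intsLE hx

theorem exists_mulEnergy_farey_le {ε : ℝ} (hε : 0 < ε) :
    ∃ C : ℝ, ∀ H : ℝ, 1 ≤ H → (Eₘ[(finite_farey H).toFinset] : ℝ) ≤ C * H ^ (4 + ε) := by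
  obtain ⟨C, hC⟩ := exists_card_intDivisors_le_mul_rpow (ε := ε / 16) (by positivity)
  have hC0 : 0 ≤ C := by simpa using (Nat.cast_nonneg _).trans (hC 1)
  refine ⟨81 * (C ^ 4 + 4), fun H hH ↦ ?_⟩
  have hH0 : 0 < H := by linarith
  set D : ℕ := ⌊C * H ^ (ε / 4)⌋₊
  have D_le : (D : ℝ) ≤ C * H ^ (ε / 4) := Nat.floor_le (by positivity)
  have card_divisors_le : ∀ u : Fin 4 → ℤ, (∀ i, u i ∈ intsLE H) → #(∏ i, u i).divisors ≤ D := by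
    intro u hu
    have prod_le : |((∏ i, u i : ℤ) : ℝ)| ≤ H ^ 4 := by
      rw [Int.cast_prod, abs_prod]
      simpa using prod_le_prod (s := univ) (fun i _ ↦ abs_nonneg (u i : ℝ))
        fun i _ ↦ mem_intsLE.mp (hu i)
    refine Nat.le_floor ?_
    calc (#(∏ i, u i).divisors : ℝ) ≤ C * |((∏ i, u i : ℤ) : ℝ)| ^ (ε / 16) := hC _
      _ ≤ C * (H ^ 4) ^ (ε / 16) := by gcongr
      _ = C * H ^ (ε / 4) := by
          rw [← Real.rpow_natCast_mul hH0.le]; ring_nf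
  have energy_le := mulEnergy_le_of_num_den_mem (s := (finite_farey H).toFinset)
    (fun x hx ↦ num_mem_intsLE_and_den_mem_intsLE (by simpa using hx)) card_divisors_le
  calc (Eₘ[(finite_farey H).toFinset] : ℝ) ≤ (#(intsLE H) : ℝ) ^ 4 * ((D : ℝ) ^ 4 + 4) := by
        exact_mod_cast energy_le
    _ ≤ (3 * H) ^ 4 * ((C * H ^ (ε / 4)) ^ 4 + 4 * H ^ ε) := by
        gcongr
        · linarith [card_intsLE_le hH0.le]
        · linarith [Real.one_le_rpow hH hε.le]
    _ = 81 * (C ^ 4 + 4) * (H ^ 4 * H ^ ε) := by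
        have : (H ^ (ε / 4)) ^ 4 = H ^ ε := by
          rw [← Real.rpow_mul_natCast hH0.le]; ring_nf
        rw [mul_pow C, this]; ring
    _ = 81 * (C ^ 4 + 4) * H ^ (4 + ε) := by
        rw [Real.rpow_add hH0]; norm_cast

end Farey

theorem stmt2 :
    ∀ ε > (0 : ℝ), ∃ C : ℝ, ∀ H : ℝ, H ≥ 2 → ∀ δ : ℚ,
      (Set.ncard {A : Matrix (Fin 2) (Fin 2) ℚ |
          (∀ i j, A i j ∈ Farey H) ∧ A.det = δ} : ℝ) ≤
        C * H ^ ((4 : ℝ) + ε) := by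
  intro ε hε
  obtain ⟨C, hC⟩ := exists_mulEnergy_farey_le hε
  refine ⟨C, fun H hH δ ↦ le_trans ?_ (hC H (by linarith))⟩
  simpa using ncard_det_eq_le_mulEnergy (finite_farey H).toFinset δ
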